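/- arXiv:2512.08182 — 2 statements merged into one kernel-verified Lean document; each statement's English description precedes it below -/
import Mathlib

section
/- Let v_1, …, v_n ∈ R^r, let m, n be positive integers with N = n·m, and suppose λ ∈ R^r satisfies 1 + λ' v_i > 0 for every i and (1/n) Σ_{i=1}^n v_i/(1 + λ' v_i) = 0. Define q_i = 1/(N (1 + λ' v_i)) for i = 1, …, n. Then q_i > 0 for all i, Σ_{i=1}^n q_i = 1/m, Σ_{i=1}^n q_i v_i = 0, and for every vector (p_1, …, p_n) with p_i ≥ 0, Σ_{i=1}^n p_i = 1/m and Σ_{i=1}^n p_i v_i = 0 one has Π_{i=1}^n p_i^m ≤ Π_{i=1}^n q_i^m; that is, the weights q_i maximize the grouped empirical likelihood Π_{i=1}^n q_i^m subject to the nonnegativity, normalization, and estimating-equation constraints. -/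
/-!
Pairing the constraint `∑ i, p i • v i = 0` with the multiplier `λ` shows that the factors
`1 + λ'v i` do not change the total mass of `p`. With `q i = 1 / (N (1 + λ'v i))`, this gives `q`
its total mass and forces the ratios `p i / q i = N p i (1 + λ'v i)` of any feasible `p` to have
mean `1`; by AM-GM their product is at most `1`.
-/

open Finset Matrix

section MeanInequality

variable {ι : Type*} {s : Finset ι}

theorem prod_le_one_of_sum_le_card {x : ι → ℝ} (hx : ∀ i ∈ s, 0 ≤ x i)
    (hsum : ∑ i ∈ s, x i ≤ #s) : ∏ i ∈ s, x i ≤ 1 :=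
  calc ∏ i ∈ s, x i
      ≤ ∏ i ∈ s, Real.exp (x i - 1) := by
        gcongr with i
        · exact hx
        · simpa only [sub_add_cancel] using Real.add_one_le_exp (x i - 1)
    _ = Real.exp (∑ i ∈ s, x i - #s) := by
        rw [← Real.exp_sum, sum_sub_distrib, sum_const, nsmul_one]
    _ ≤ 1 := Real.exp_le_one_iff.mpr (sub_nonpos.mpr hsum)

theorem prod_le_prod_of_sum_div_le_card {p q : ι → ℝ} (hp : ∀ i ∈ s, 0 ≤ p i)
    (hq : ∀ i ∈ s, 0 < q i) (hsum : ∑ i ∈ s, p i / q i ≤ #s) :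
    ∏ i ∈ s, p i ≤ ∏ i ∈ s, q i := by
  have hratio : ∏ i ∈ s, p i / q i ≤ 1 :=
    prod_le_one_of_sum_le_card (fun i hi ↦ div_nonneg (hp i hi) (hq i hi).le) hsum
  rwa [prod_div_distrib, div_le_one (prod_pos hq)] at hratio

end MeanInequality

theorem sum_mul_one_add_apply {ι R E : Type*} [CommSemiring R] [AddCommMonoid E] [Module R E]
    {s : Finset ι} {p : ι → R} {v : ι → E} (φ : Module.Dual R E)
    (hpv : ∑ i ∈ s, p i • v i = 0) :
    ∑ i ∈ s, p i * (1 + φ (v i)) = ∑ i ∈ s, p i := by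
  have hφ : ∑ i ∈ s, p i * φ (v i) = 0 := by
    simpa only [map_sum, map_smul, smul_eq_mul, map_zero] using congrArg φ hpv
  simp only [mul_add, mul_one, sum_add_distrib, hφ, add_zero]

/-- The empirical likelihood weight `1 / (N (1 + λ'v i))` of the value `v i` of the estimating
function. The Lagrange multiplier `λ` is encoded as the linear functional `φ = (x ↦ λ'x)`. -/
def elWeight {ι K E : Type*} [Field K] [AddCommGroup E] [Module K E]
    (N : K) (φ : Module.Dual K E) (v : ι → E) (i : ι) : K :=
  1 / (N * (1 + φ (v i)))

section Feasibility

variable {ι K E : Type*} [Field K] [AddCommGroup E] [Module K E]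
  {N : K} {φ : Module.Dual K E} {v : ι → E} {s : Finset ι}

theorem elWeight_pos [LinearOrder K] [IsStrictOrderedRing K] {i : ι} (hN : 0 < N)
    (hpos : 0 < 1 + φ (v i)) : 0 < elWeight N φ v i :=
  one_div_pos.mpr (mul_pos hN hpos)

theorem sum_elWeight_smul (hφ : ∑ i ∈ s, (1 + φ (v i))⁻¹ • v i = 0) :
    ∑ i ∈ s, elWeight N φ v i • v i = 0 := by
  simp only [elWeight, one_div, mul_inv, mul_smul, ← smul_sum, hφ, smul_zero]

theorem sum_elWeight (hne : ∀ i ∈ s, 1 + φ (v i) ≠ 0)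
    (hφ : ∑ i ∈ s, (1 + φ (v i))⁻¹ • v i = 0) :
    ∑ i ∈ s, elWeight N φ v i = #s / N :=
  calc ∑ i ∈ s, elWeight N φ v i
      = ∑ i ∈ s, elWeight N φ v i * (1 + φ (v i)) :=
        (sum_mul_one_add_apply φ (sum_elWeight_smul hφ)).symm
    _ = ∑ _i ∈ s, N⁻¹ := sum_congr rfl fun i hi ↦ by
        rw [elWeight, one_div, mul_inv, inv_mul_cancel_right₀ (hne i hi)]
    _ = #s / N := by rw [sum_const, nsmul_eq_mul, div_eq_mul_inv]

theorem sum_div_elWeight {p : ι → K} (hpv : ∑ i ∈ s, p i • v i = 0) :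
    ∑ i ∈ s, p i / elWeight N φ v i = N * ∑ i ∈ s, p i := by
  rw [← sum_mul_one_add_apply φ hpv, mul_sum]
  exact sum_congr rfl fun i _ ↦ by rw [elWeight, div_div_eq_mul_div, div_one, mul_left_comm]

end Feasibility

theorem prod_le_prod_elWeight {ι E : Type*} [AddCommGroup E] [Module ℝ E] {s : Finset ι}
    {N : ℝ} {φ : Module.Dual ℝ E} {v : ι → E} {p : ι → ℝ} (hN : 0 < N)
    (hpos : ∀ i ∈ s, 0 < 1 + φ (v i)) (hp : ∀ i ∈ s, 0 ≤ p i)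
    (hsum : ∑ i ∈ s, p i ≤ #s / N) (hpv : ∑ i ∈ s, p i • v i = 0) :
    ∏ i ∈ s, p i ≤ ∏ i ∈ s, elWeight N φ v i := by
  refine prod_le_prod_of_sum_div_le_card hp (fun i hi ↦ elWeight_pos hN (hpos i hi)) ?_
  rwa [sum_div_elWeight hpv, ← le_div_iff₀' hN]

theorem gel_weights_maximize_likelihood_general {ι E : Type*} [Fintype ι] [Nonempty ι]
    [AddCommGroup E] [Module ℝ E] {m : ℕ} (hm : 0 < m) {φ : Module.Dual ℝ E} {v : ι → E}
    (hpos : ∀ i, 0 < 1 + φ (v i)) (hφ : ∑ i, (1 + φ (v i))⁻¹ • v i = 0) :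
    (∀ i, 0 < elWeight (Fintype.card ι * m : ℝ) φ v i) ∧
    (∑ i, elWeight (Fintype.card ι * m : ℝ) φ v i = 1 / m) ∧
    (∑ i, elWeight (Fintype.card ι * m : ℝ) φ v i • v i = 0) ∧
    (∀ p : ι → ℝ, (∀ i, 0 ≤ p i) → (∑ i, p i = 1 / m) → (∑ i, p i • v i = 0) →
      ∏ i, p i ^ m ≤ ∏ i, elWeight (Fintype.card ι * m : ℝ) φ v i ^ m) := by
  have hN : (0 : ℝ) < Fintype.card ι * m := by positivity
  have hmass : (#(univ : Finset ι) : ℝ) / (Fintype.card ι * m) = 1 / m := by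
    rw [card_univ, div_mul_cancel_left₀ (by positivity), one_div]
  refine ⟨fun i ↦ elWeight_pos hN (hpos i), ?_, sum_elWeight_smul hφ, fun p hp hsum hpv ↦ ?_⟩
  · rw [sum_elWeight (fun i _ ↦ (hpos i).ne') hφ, hmass]
  · rw [prod_pow, prod_pow]
    have hprod : ∏ i, p i ≤ ∏ i, elWeight (Fintype.card ι * m : ℝ) φ v i :=
      prod_le_prod_elWeight hN (fun i _ ↦ hpos i) (fun i _ ↦ hp i) (hsum.trans hmass.symm).le hpv
    exact pow_le_pow_left₀ (prod_nonneg fun i _ ↦ hp i) hprod m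

/-- **Grouped empirical likelihood weights are optimal.**
If `λ` satisfies the grouped empirical likelihood estimating equation
`(1/n) ∑ᵢ vᵢ / (1 + λ'vᵢ) = 0` with `1 + λ'vᵢ > 0` for every `i`, then the weights
`qᵢ = 1/(N (1 + λ'vᵢ))` (with `N = n·m`) are positive, sum to `1/m`, satisfy the
estimating-equation constraint `∑ᵢ qᵢ vᵢ = 0`, and maximize the grouped empirical
likelihood `∏ᵢ qᵢ^m` over all weight vectors satisfying the nonnegativity,
normalization, and estimating-equation constraints. -/
theorem gel_weights_maximize_likelihood
    {r n m : ℕ} (hn : 0 < n) (hm : 0 < m)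
    (v : Fin n → Fin r → ℝ) (lam : Fin r → ℝ)
    (hpos : ∀ i, 0 < 1 + lam ⬝ᵥ v i)
    (heq : ((n : ℝ))⁻¹ • ∑ i, (1 + lam ⬝ᵥ v i)⁻¹ • v i = (0 : Fin r → ℝ)) :
    (∀ i, 0 < (1 : ℝ) / ((n * m : ℕ) * (1 + lam ⬝ᵥ v i))) ∧
    (∑ i, (1 : ℝ) / ((n * m : ℕ) * (1 + lam ⬝ᵥ v i)) = 1 / m) ∧
    (∑ i, ((1 : ℝ) / ((n * m : ℕ) * (1 + lam ⬝ᵥ v i))) • v i = (0 : Fin r → ℝ)) ∧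
    (∀ p : Fin n → ℝ, (∀ i, 0 ≤ p i) → (∑ i, p i = 1 / m) →
      (∑ i, p i • v i = (0 : Fin r → ℝ)) →
      ∏ i, p i ^ m ≤ ∏ i, ((1 : ℝ) / ((n * m : ℕ) * (1 + lam ⬝ᵥ v i))) ^ m) := by
  have : Nonempty (Fin n) := Fin.pos_iff_nonempty.mp hn
  simpa only [elWeight, Fintype.card_fin, Nat.cast_mul, dotProductBilin_apply_apply] using
    gel_weights_maximize_likelihood_general hm (φ := dotProductBilin ℝ ℝ lam) hpos
      ((smul_eq_zero.mp heq).resolve_left (by positivity))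
end

section
/- Let v_1, …, v_n ∈ R^r and let λ ∈ R^r, λ ≠ 0, satisfy 1 + λ' v_i > 0 for every i and Σ_{i=1}^n v_i / (1 + λ' v_i) = 0. Write u = λ/‖λ‖, v̄ = (1/n) Σ_{i=1}^n v_i, S = (1/n) Σ_{i=1}^n v_i v_i', and Z* = max_{1 ≤ i ≤ n} ‖v_i‖. Then u' v̄ ≥ 0 and ‖λ‖ ( u' S u − Z* · u' v̄ ) ≤ u' v̄. -/
open Finset
open scoped RealInnerProductSpace

/-!
With `t = ‖λ‖`, `aᵢ = u'vᵢ` and weights `wᵢ` in place of `1/n`, pairing the equation with `u` gives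
`∑ wᵢaᵢ/(1 + taᵢ) = 0`. Subtracting it from `∑ wᵢaᵢ` termwise gives
`∑ wᵢaᵢ = t ∑ wᵢaᵢ²/(1 + taᵢ)`. The right-hand side is nonnegative, and since `aᵢ ≤ Z*` its
denominators are at most `1 + tZ*`, so it is at least `t ∑ wᵢaᵢ²/(1 + tZ*)`.
-/

section Scalar

theorem sub_div_one_add_mul {K : Type*} [Field K] {a t : K} (h : 1 + t * a ≠ 0) :
    a - a / (1 + t * a) = t * a ^ 2 / (1 + t * a) := by
  rw [eq_div_iff h, sub_mul, div_mul_cancel₀ a h]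
  ring

variable {ι K : Type*} [Field K] {s : Finset ι} {w a : ι → K} {t Z : K}

theorem sum_mul_eq_sum_mul_sq_div_one_add_mul (hne : ∀ i ∈ s, 1 + t * a i ≠ 0)
    (hzero : ∑ i ∈ s, w i * (a i / (1 + t * a i)) = 0) :
    ∑ i ∈ s, w i * a i = ∑ i ∈ s, w i * (t * a i ^ 2 / (1 + t * a i)) :=
  calc ∑ i ∈ s, w i * a i
      = ∑ i ∈ s, w i * a i - ∑ i ∈ s, w i * (a i / (1 + t * a i)) := by rw [hzero, sub_zero]
    _ = ∑ i ∈ s, w i * (a i - a i / (1 + t * a i)) := by simp only [mul_sub, sum_sub_distrib]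
    _ = ∑ i ∈ s, w i * (t * a i ^ 2 / (1 + t * a i)) :=
        sum_congr rfl fun i hi => by rw [sub_div_one_add_mul (hne i hi)]

variable [LinearOrder K] [IsStrictOrderedRing K]

theorem sum_mul_nonneg_of_sum_mul_div_one_add_mul_eq_zero (hw : ∀ i ∈ s, 0 ≤ w i) (ht : 0 ≤ t)
    (hpos : ∀ i ∈ s, 0 < 1 + t * a i) (hzero : ∑ i ∈ s, w i * (a i / (1 + t * a i)) = 0) :
    0 ≤ ∑ i ∈ s, w i * a i := by
  rw [sum_mul_eq_sum_mul_sq_div_one_add_mul (fun i hi => (hpos i hi).ne') hzero]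
  exact sum_nonneg fun i hi =>
    mul_nonneg (hw i hi) (div_nonneg (mul_nonneg ht (sq_nonneg _)) (hpos i hi).le)

theorem mul_sum_mul_sq_le_of_sum_mul_div_one_add_mul_eq_zero (hw : ∀ i ∈ s, 0 ≤ w i) (ht : 0 ≤ t)
    (hpos : ∀ i ∈ s, 0 < 1 + t * a i) (hZ : ∀ i ∈ s, a i ≤ Z)
    (hzero : ∑ i ∈ s, w i * (a i / (1 + t * a i)) = 0) :
    t * ∑ i ∈ s, w i * a i ^ 2 ≤ (1 + t * Z) * ∑ i ∈ s, w i * a i := by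
  have hterm : ∀ i ∈ s, t * a i ^ 2 ≤ (1 + t * Z) * (t * a i ^ 2 / (1 + t * a i)) := fun i hi =>
    calc t * a i ^ 2
        = (1 + t * a i) * (t * a i ^ 2 / (1 + t * a i)) := (mul_div_cancel₀ _ (hpos i hi).ne').symm
      _ ≤ (1 + t * Z) * (t * a i ^ 2 / (1 + t * a i)) := by
        have hden := (hpos i hi).le
        gcongr
        exact hZ i hi
  rw [sum_mul_eq_sum_mul_sq_div_one_add_mul (fun i hi => (hpos i hi).ne') hzero, mul_sum, mul_sum]
  refine sum_le_sum fun i hi => ?_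
  rw [mul_left_comm t, mul_left_comm (1 + t * Z)]
  exact mul_le_mul_of_nonneg_left (hterm i hi) (hw i hi)

end Scalar

theorem el_lambda_norm_bound_general {ι E : Type*} [NormedAddCommGroup E] [InnerProductSpace ℝ E]
    {s : Finset ι} (hs : s.Nonempty) {w : ι → ℝ} (hw : ∀ i ∈ s, 0 ≤ w i) (v : ι → E)
    {lam : E} (hlam : lam ≠ 0) (hpos : ∀ i ∈ s, 0 < 1 + ⟪lam, v i⟫)
    (heq : ∑ i ∈ s, w i • (1 + ⟪lam, v i⟫)⁻¹ • v i = 0) :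
    0 ≤ ⟪‖lam‖⁻¹ • lam, ∑ i ∈ s, w i • v i⟫ ∧
    ‖lam‖ * (∑ i ∈ s, w i * ⟪‖lam‖⁻¹ • lam, v i⟫ ^ 2 -
        s.sup' hs (fun i => ‖v i‖) * ⟪‖lam‖⁻¹ • lam, ∑ i ∈ s, w i • v i⟫) ≤
      ⟪‖lam‖⁻¹ • lam, ∑ i ∈ s, w i • v i⟫ := by
  set u := ‖lam‖⁻¹ • lam with hu
  have hnorm_u : ‖u‖ = 1 := norm_smul_inv_norm (𝕜 := ℝ) hlam
  have hinner (i : ι) : ⟪lam, v i⟫ = ‖lam‖ * ⟪u, v i⟫ := by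
    rw [← real_inner_smul_left, hu, smul_inv_smul₀ (norm_ne_zero_iff.mpr hlam)]
  have hle : ∀ i ∈ s, ⟪u, v i⟫ ≤ s.sup' hs fun i => ‖v i‖ := fun i hi =>
    calc ⟪u, v i⟫ ≤ ‖u‖ * ‖v i‖ := real_inner_le_norm u (v i)
      _ = ‖v i‖ := by rw [hnorm_u, one_mul]
      _ ≤ s.sup' hs fun i => ‖v i‖ := le_sup' (fun i => ‖v i‖) hi
  have hzero : ∑ i ∈ s, w i * (⟪u, v i⟫ / (1 + ‖lam‖ * ⟪u, v i⟫)) = 0 := by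
    simpa only [inner_sum, real_inner_smul_right, inner_zero_right, hinner, inv_mul_eq_div]
      using congrArg (⟪u, ·⟫) heq
  simp only [hinner] at hpos
  simp only [inner_sum, real_inner_smul_right]
  have hnonneg := sum_mul_nonneg_of_sum_mul_div_one_add_mul_eq_zero hw (norm_nonneg lam) hpos hzero
  have hbound :=
    mul_sum_mul_sq_le_of_sum_mul_div_one_add_mul_eq_zero hw (norm_nonneg lam) hpos hle hzero
  exact ⟨hnonneg, by linarith⟩

/-- **Deterministic bound on the norm of the empirical likelihood Lagrange multiplier.**
If `λ ≠ 0` satisfies `1 + λ'vᵢ > 0` for all `i` and `∑ᵢ vᵢ/(1 + λ'vᵢ) = 0`, then with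
`u = λ/‖λ‖`, `v̄ = (1/n)∑ᵢ vᵢ`, `u'Su = (1/n)∑ᵢ (u'vᵢ)²` and `Z* = maxᵢ ‖vᵢ‖`, one has
`u'v̄ ≥ 0` and `‖λ‖ (u'Su − Z*·u'v̄) ≤ u'v̄`. -/
theorem el_lambda_norm_bound
    {r n : ℕ} (hn : 0 < n)
    (v : Fin n → EuclideanSpace ℝ (Fin r))
    (lam : EuclideanSpace ℝ (Fin r)) (hlam : lam ≠ 0)
    (hpos : ∀ i, 0 < 1 + ⟪lam, v i⟫)
    (heq : ∑ i, (1 + ⟪lam, v i⟫)⁻¹ • v i = (0 : EuclideanSpace ℝ (Fin r))) :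
    0 ≤ ⟪‖lam‖⁻¹ • lam, (n : ℝ)⁻¹ • ∑ i, v i⟫ ∧
    ‖lam‖ * ((n : ℝ)⁻¹ * ∑ i, ⟪‖lam‖⁻¹ • lam, v i⟫ ^ 2 -
        (Finset.univ.sup' ⟨⟨0, hn⟩, Finset.mem_univ _⟩ fun i => ‖v i‖) *
          ⟪‖lam‖⁻¹ • lam, (n : ℝ)⁻¹ • ∑ i, v i⟫) ≤
      ⟪‖lam‖⁻¹ • lam, (n : ℝ)⁻¹ • ∑ i, v i⟫ := by
  simpa only [← smul_sum, ← mul_sum] using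
    el_lambda_norm_bound_general (w := fun _ => (n : ℝ)⁻¹) ⟨⟨0, hn⟩, mem_univ _⟩
      (fun _ _ => by positivity) v hlam (fun i _ => hpos i) (by rw [← smul_sum, heq, smul_zero])
end
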